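/- arXiv:1607.03286 — 5 statements merged into one kernel-verified Lean document; each statement's English description precedes it below -/
import Mathlib

section
/- Let D be a dcpo and let 𝒜 be a subset of the order sobrification D̂ of D. If 𝒜 is irreducible as a subset of D̂ (with respect to the Scott topology on D̂), then the union ⋃𝒜 is irreducible as a subset of D. -/
/-!
If `B` is Scott-closed in `D`, then `{A ∈ D̂ | A ⊆ B}` is Scott-closed in `D̂`, because a directed
supremum in `D̂` is the closure of the union. In other words, the tautological correspondence
`A ↦ A` from `D̂` to subsets of `D` is lower hemicontinuous: the members of `D̂` meeting a given
open set form an open set. Hence two open sets that meet `⋃ 𝒜` give two open sets of `D̂` that meet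
`𝒜`; by irreducibility of `𝒜` a single `A ∈ 𝒜` meets both, and irreducibility of `A` concludes.
-/

namespace HoZhao

variable {α : Type*}

/-- A set is Scott-closed if it is a lower set and contains the supremum of each of its
nonempty directed subsets. -/
def ScottClosed [Preorder α] (S : Set α) : Prop :=
  IsLowerSet S ∧ ∀ d : Set α, d ⊆ S → d.Nonempty → DirectedOn (· ≤ ·) d →
    ∀ a : α, IsLUB d a → a ∈ S

/-- A nonempty set is irreducible if whenever it is covered by two Scott-closed sets it is
contained in one of them. -/
def ScottIrred [Preorder α] (A : Set α) : Prop :=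
  A.Nonempty ∧ ∀ B C : Set α, ScottClosed B → ScottClosed C → A ⊆ B ∪ C → A ⊆ B ∨ A ⊆ C

/-- A dcpo: every nonempty directed subset has a supremum. -/
def IsDcpo (α : Type*) [Preorder α] : Prop :=
  ∀ d : Set α, d.Nonempty → DirectedOn (· ≤ ·) d → ∃ a : α, IsLUB d a

/-- The order sobrification: the poset of Scott-closed irreducible subsets, ordered by
inclusion. -/
abbrev OrderSob (α : Type*) [Preorder α] :=
  {A : Set α // ScottClosed A ∧ ScottIrred A}

open Set Topology

section Irreducible

variable {X Y : Type*} [TopologicalSpace X] [TopologicalSpace Y]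

theorem isPreirreducible_biUnion_of_directedOn {ι : Type*} {s : ι → Set X} {I : Set ι}
    (hdir : DirectedOn (fun i j ↦ s i ⊆ s j) I) (hs : ∀ i ∈ I, IsPreirreducible (s i)) :
    IsPreirreducible (⋃ i ∈ I, s i) := by
  rintro u v hu hv ⟨x, hx, hxu⟩ ⟨y, hy, hyv⟩
  obtain ⟨i, hi, hxi⟩ := mem_iUnion₂.1 hx
  obtain ⟨j, hj, hyj⟩ := mem_iUnion₂.1 hy
  obtain ⟨k, hk, hik, hjk⟩ := hdir i hi j hj
  exact (hs k hk u v hu hv ⟨x, hik hxi, hxu⟩ ⟨y, hjk hyj, hyv⟩).mono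
    (inter_subset_inter_left _ (subset_biUnion_of_mem hk))

theorem isPreirreducible_biUnion_of_lowerHemicontinuous {F : Y → Set X} {T : Set Y}
    (hF : LowerHemicontinuous F) (hT : IsPreirreducible T)
    (hFT : ∀ y ∈ T, IsPreirreducible (F y)) : IsPreirreducible (⋃ y ∈ T, F y) := by
  rintro u v hu hv ⟨x, hx, hxu⟩ ⟨x', hx', hxv⟩
  obtain ⟨y, hy, hxy⟩ := mem_iUnion₂.1 hx
  obtain ⟨y', hy', hxy'⟩ := mem_iUnion₂.1 hx'
  have isOpen_hit (w : Set X) (hw : IsOpen w) : IsOpen {y | (F y ∩ w).Nonempty} :=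
    lowerHemicontinuous_iff_isOpen_inter_nonempty.1 hF w hw
  obtain ⟨z, hz, hzu, hzv⟩ := hT _ _ (isOpen_hit u hu) (isOpen_hit v hv)
    ⟨y, hy, x, hxy, hxu⟩ ⟨y', hy', x', hxy', hxv⟩
  exact (hFT z hz u v hu hv hzu hzv).mono
    (inter_subset_inter_left _ (subset_biUnion_of_mem hz))

end Irreducible

section Scott

variable [Preorder α]

theorem OrderSob.nonempty_biUnion {d : Set (OrderSob α)} (hd : d.Nonempty) :
    (⋃ A ∈ d, (A : Set α)).Nonempty :=
  Set.nonempty_biUnion.2 (hd.imp fun A hA ↦ ⟨hA, A.2.2.1⟩)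

variable [TopologicalSpace α] [IsScott α univ]

theorem scottClosed_iff_isClosed {S : Set α} : ScottClosed S ↔ IsClosed S :=
  IsScott.isClosed_iff_isLowerSet_and_dirSupClosed.symm

theorem scottIrred_iff_isIrreducible {S : Set α} : ScottIrred S ↔ IsIrreducible S := by
  simp only [ScottIrred, IsIrreducible, isPreirreducible_iff_isClosed_union_isClosed,
    scottClosed_iff_isClosed]

theorem OrderSob.isClosed (A : OrderSob α) : IsClosed (A : Set α) :=
  scottClosed_iff_isClosed.1 A.2.1

theorem OrderSob.isIrreducible (A : OrderSob α) : IsIrreducible (A : Set α) :=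
  scottIrred_iff_isIrreducible.1 A.2.2

theorem OrderSob.coe_eq_closure_biUnion_of_isLUB {d : Set (OrderSob α)} (hne : d.Nonempty)
    (hdir : DirectedOn (· ≤ ·) d) {S : OrderSob α} (hS : IsLUB d S) :
    (S : Set α) = closure (⋃ A ∈ d, (A : Set α)) := by
  have hirr : IsIrreducible (⋃ A ∈ d, (A : Set α)) :=
    ⟨nonempty_biUnion hne,
      isPreirreducible_biUnion_of_directedOn hdir fun A _ ↦ A.isIrreducible.isPreirreducible⟩
  let K : OrderSob α := ⟨closure (⋃ A ∈ d, (A : Set α)),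
    scottClosed_iff_isClosed.2 isClosed_closure, scottIrred_iff_isIrreducible.2 hirr.closure⟩
  have hK : K ∈ upperBounds d := fun A hA ↦
    (subset_biUnion_of_mem (u := fun A : OrderSob α ↦ (A : Set α)) hA).trans subset_closure
  exact Subset.antisymm (hS.2 hK) (closure_minimal (iUnion₂_subset hS.1) S.isClosed)

theorem OrderSob.scottClosed_setOf_coe_subset {B : Set α} (hB : IsClosed B) :
    ScottClosed {A : OrderSob α | (A : Set α) ⊆ B} := by
  refine ⟨fun A A' hle hA ↦ Subset.trans hle hA, fun d hd hne hdir S hS ↦ ?_⟩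
  calc (S : Set α) = closure (⋃ A ∈ d, (A : Set α)) := coe_eq_closure_biUnion_of_isLUB hne hdir hS
    _ ⊆ B := closure_minimal (iUnion₂_subset hd) hB

theorem OrderSob.lowerHemicontinuous_coe [TopologicalSpace (OrderSob α)]
    [IsScott (OrderSob α) univ] :
    LowerHemicontinuous (fun A : OrderSob α ↦ (A : Set α)) :=
  lowerHemicontinuous_iff_isClosed_preimage_Iic.2 fun _ hB ↦
    scottClosed_iff_isClosed.1 (scottClosed_setOf_coe_subset hB)

end Scott

theorem union_of_irreducible_family_is_irreducible_general [Preorder α]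
    (𝒜 : Set (OrderSob α)) (h𝒜 : ScottIrred 𝒜) :
    ScottIrred (⋃ A ∈ 𝒜, (A : Set α)) := by
  let _ : TopologicalSpace α := scott α univ
  let _ : TopologicalSpace (OrderSob α) := scott (OrderSob α) univ
  have : IsScott α univ := ⟨rfl⟩
  have : IsScott (OrderSob α) univ := ⟨rfl⟩
  rw [scottIrred_iff_isIrreducible] at h𝒜 ⊢
  exact ⟨OrderSob.nonempty_biUnion h𝒜.nonempty,
    isPreirreducible_biUnion_of_lowerHemicontinuous OrderSob.lowerHemicontinuous_coe
      h𝒜.isPreirreducible fun A _ ↦ A.isIrreducible.isPreirreducible⟩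

/-- If 𝒜 ⊆ D̂ is irreducible (w.r.t. the Scott topology of D̂), then ⋃𝒜 is
irreducible as a subset of D. -/
theorem union_of_irreducible_family_is_irreducible [PartialOrder α] (hD : IsDcpo α)
    (𝒜 : Set (OrderSob α)) (h𝒜 : ScottIrred 𝒜) :
    ScottIrred (⋃ A ∈ 𝒜, (A : Set α)) :=
  union_of_irreducible_family_is_irreducible_general 𝒜 h𝒜

end HoZhao
end

section
/- Let D be a dcpo and let 𝒜 be a subset of the order sobrification D̂ of D. If 𝒜 is Scott-closed as a subset of D̂, then the union ⋃𝒜 is Scott-closed as a subset of D. -/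
/-!
The map `η : D → D̂` sending `x` to its principal ideal `↓x` is Scott-continuous: a Scott-closed
set contains the supremum of a directed set `d` exactly when it contains `d`, so `↓(sup d)` is the
least closed irreducible set above every `↓x` with `x ∈ d`. For a lower set `𝒜` of `D̂`, a point `x`
lies in `⋃ 𝒜` if and only if `↓x ∈ 𝒜`, that is, `⋃ 𝒜 = η⁻¹(𝒜)`, and Scott-closed sets pull back to
Scott-closed sets along Scott-continuous maps.
-/

namespace HoZhao

variable {α : Type*}

section Preorder

variable [Preorder α]

theorem ScottClosed.mem_iff_subset_of_isLUB {S d : Set α} {a : α} (hS : ScottClosed S)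
    (hne : d.Nonempty) (hdir : DirectedOn (· ≤ ·) d) (ha : IsLUB d a) : a ∈ S ↔ d ⊆ S :=
  ⟨fun haS _ hx => hS.1 (ha.1 hx) haS, fun hd => hS.2 d hd hne hdir a ha⟩

theorem ScottClosed.preimage {β : Type*} [Preorder β] {f : α → β} {S : Set β}
    (hS : ScottClosed S) (hf : ScottContinuous f) : ScottClosed (f ⁻¹' S) := by
  refine ⟨hS.1.preimage hf.monotone, fun d hd hne hdir a ha => ?_⟩
  have himage : DirectedOn (· ≤ ·) (f '' d) := hdir.mono_comp hf.monotone
  exact hS.2 (f '' d) (Set.image_subset_iff.mpr hd) (hne.image f) himage (f a) (hf hne hdir ha)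

theorem scottClosed_Iic (x : α) : ScottClosed (Set.Iic x) :=
  ⟨isLowerSet_Iic x, fun _ hd _ _ _ ha => ha.2 hd⟩

theorem scottIrred_Iic (x : α) : ScottIrred (Set.Iic x) :=
  ⟨Set.nonempty_Iic, fun _ _ hB hC h =>
    (h Set.self_mem_Iic).imp (hB.1.Iic_subset ·) (hC.1.Iic_subset ·)⟩

/-- The unit `η : D → D̂` of the order sobrification, sending `x` to its principal ideal `↓x`. -/
def principal (x : α) : OrderSob α :=
  ⟨Set.Iic x, scottClosed_Iic x, scottIrred_Iic x⟩

theorem principal_le_iff {x : α} {A : OrderSob α} : principal x ≤ A ↔ x ∈ (A : Set α) :=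
  ⟨fun h => h Set.self_mem_Iic, (A.2.1.1.Iic_subset ·)⟩

theorem scottContinuous_principal : ScottContinuous (principal : α → OrderSob α) := by
  intro d hne hdir a ha
  refine isLUB_iff_le_iff.mpr fun A => ?_
  calc principal a ≤ A
    _ ↔ a ∈ (A : Set α) := principal_le_iff
    _ ↔ d ⊆ (A : Set α) := A.2.1.mem_iff_subset_of_isLUB hne hdir ha
    _ ↔ ∀ x ∈ d, principal x ≤ A := forall₂_congr fun _ _ => principal_le_iff.symm
    _ ↔ A ∈ upperBounds (principal '' d) := (Set.forall_mem_image (p := (· ≤ A))).symm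

theorem biUnion_eq_preimage_principal {𝒜 : Set (OrderSob α)} (h𝒜 : IsLowerSet 𝒜) :
    ⋃ A ∈ 𝒜, (A : Set α) = principal ⁻¹' 𝒜 := by
  ext x
  simp only [Set.mem_iUnion₂, Set.mem_preimage]
  constructor
  · rintro ⟨A, hA, hx⟩
    exact h𝒜 (principal_le_iff.mpr hx) hA
  · intro hx
    exact ⟨principal x, hx, Set.self_mem_Iic⟩

theorem union_of_closed_family_is_closed_general (𝒜 : Set (OrderSob α)) (h𝒜 : ScottClosed 𝒜) :
    ScottClosed (⋃ A ∈ 𝒜, (A : Set α)) := by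
  rw [biUnion_eq_preimage_principal h𝒜.1]
  exact h𝒜.preimage scottContinuous_principal

end Preorder

/-- If 𝒜 ⊆ D̂ is Scott-closed, then ⋃𝒜 is Scott-closed as a subset of D. -/
theorem union_of_closed_family_is_closed [PartialOrder α] (hD : IsDcpo α)
    (𝒜 : Set (OrderSob α)) (h𝒜 : ScottClosed 𝒜) :
    ScottClosed (⋃ A ∈ 𝒜, (A : Set α)) :=
  union_of_closed_family_is_closed_general 𝒜 h𝒜

end HoZhao
end

section
/- For every dcpo D, the order sobrification D̂ is strongly complete: every irreducible subset of D̂ (with respect to the Scott topology of D̂) has a supremum in D̂, namely the Scott closure of its union. -/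
namespace HoZhao

variable {α : Type*}

/-- The Scott closure of a set: the intersection of all Scott-closed sets containing it. -/
def scottClosure [Preorder α] (S : Set α) : Set α :=
  ⋂₀ {C : Set α | ScottClosed C ∧ S ⊆ C}

/-!
A union of irreducible sets is irreducible as soon as the family cannot be split: if each member
lies in one of two Scott-closed sets, then all members lie in the same one. Directed families
cannot be split, so directed suprema in the order sobrification are closures of unions. Hence, for
each Scott-closed `B`, the points of the order sobrification contained in `B` form a Scott-closed
set, and testing an irreducible `𝒜` against two sets of this form shows that `𝒜` cannot be split.
-/

section Preorder

variable [Preorder α]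

theorem scottClosed_scottClosure (S : Set α) : ScottClosed (scottClosure S) :=
  ⟨isLowerSet_sInter fun _ hC => hC.1.1, DirSupClosed.sInter fun _ hC => hC.1.2⟩

theorem subset_scottClosure (S : Set α) : S ⊆ scottClosure S :=
  Set.subset_sInter fun _ hC => hC.2

theorem scottClosure_subset_iff {S C : Set α} (hC : ScottClosed C) :
    scottClosure S ⊆ C ↔ S ⊆ C :=
  ⟨(subset_scottClosure S).trans, fun h => Set.sInter_subset_of_mem ⟨hC, h⟩⟩

theorem ScottIrred.closure {S : Set α} (hS : ScottIrred S) : ScottIrred (scottClosure S) := by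
  refine ⟨hS.1.mono (subset_scottClosure S), fun B C hB hC hBC => ?_⟩
  rw [scottClosure_subset_iff hB, scottClosure_subset_iff hC]
  exact hS.2 B C hB hC ((subset_scottClosure S).trans hBC)

section iUnion

variable {ι : Type*} {s : Set ι} {f : ι → Set α}

theorem scottIrred_biUnion (hs : s.Nonempty) (hf : ∀ i ∈ s, ScottIrred (f i))
    (hsplit : ∀ B C, ScottClosed B → ScottClosed C → (∀ i ∈ s, f i ⊆ B ∨ f i ⊆ C) →
      (∀ i ∈ s, f i ⊆ B) ∨ ∀ i ∈ s, f i ⊆ C) :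
    ScottIrred (⋃ i ∈ s, f i) := by
  refine ⟨Set.nonempty_biUnion.2 (hs.imp fun i hi => ⟨hi, (hf i hi).1⟩), fun B C hB hC hBC => ?_⟩
  rw [Set.iUnion₂_subset_iff] at hBC
  simpa only [Set.iUnion₂_subset_iff] using
    hsplit B C hB hC fun i hi => (hf i hi).2 B C hB hC (hBC i hi)

theorem scottIrred_biUnion_of_directedOn (hs : s.Nonempty) (hdir : DirectedOn (f ⁻¹'o (· ⊆ ·)) s)
    (hf : ∀ i ∈ s, ScottIrred (f i)) : ScottIrred (⋃ i ∈ s, f i) := by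
  refine scottIrred_biUnion hs hf fun B C _ _ hBC => ?_
  by_contra! ⟨⟨i, hi, hiB⟩, j, hj, hjC⟩
  obtain ⟨k, hk, hik, hjk⟩ := hdir i hi j hj
  exact (hBC k hk).elim (fun hkB => hiB (hik.trans hkB)) fun hkC => hjC (hjk.trans hkC)

end iUnion

namespace OrderSob

/-- The Scott closure of an irreducible set, as a point of the order sobrification. -/
def ofScottIrred {S : Set α} (hS : ScottIrred S) : OrderSob α :=
  ⟨scottClosure S, scottClosed_scottClosure S, hS.closure⟩

theorem ofScottIrred_le_iff {S : Set α} (hS : ScottIrred S) {A : OrderSob α} :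
    ofScottIrred hS ≤ A ↔ S ⊆ A :=
  scottClosure_subset_iff A.2.1

theorem isLUB_ofScottIrred_biUnion {𝒜 : Set (OrderSob α)}
    (h𝒜 : ScottIrred (⋃ A ∈ 𝒜, (A : Set α))) : IsLUB 𝒜 (ofScottIrred h𝒜) :=
  isLUB_iff_le_iff.2 fun _ => (ofScottIrred_le_iff h𝒜).trans Set.iUnion₂_subset_iff

theorem scottClosed_setOf_subset {B : Set α} (hB : ScottClosed B) :
    ScottClosed {A : OrderSob α | (A : Set α) ⊆ B} := by
  refine ⟨fun _ _ hle hAB => Set.Subset.trans hle hAB, fun d hd hne hdir A hA => ?_⟩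
  have hirr : ScottIrred (⋃ A ∈ d, (A : Set α)) :=
    scottIrred_biUnion_of_directedOn hne hdir fun A _ => A.2.2
  have hA_le : A ≤ ofScottIrred hirr := hA.2 (isLUB_ofScottIrred_biUnion hirr).1
  have hclosure : scottClosure (⋃ A ∈ d, (A : Set α)) ⊆ B :=
    (scottClosure_subset_iff hB).2 (Set.iUnion₂_subset hd)
  exact Set.Subset.trans hA_le hclosure

theorem scottIrred_biUnion_of_scottIrred {𝒜 : Set (OrderSob α)} (h𝒜 : ScottIrred 𝒜) :
    ScottIrred (⋃ A ∈ 𝒜, (A : Set α)) :=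
  scottIrred_biUnion h𝒜.1 (fun A _ => A.2.2) fun _ _ hB hC =>
    h𝒜.2 _ _ (scottClosed_setOf_subset hB) (scottClosed_setOf_subset hC)

end OrderSob

theorem orderSob_strongly_complete_general (𝒜 : Set (OrderSob α)) (h𝒜 : ScottIrred 𝒜) :
    ∃ h : ScottClosed (scottClosure (⋃ A ∈ 𝒜, (A : Set α))) ∧
          ScottIrred (scottClosure (⋃ A ∈ 𝒜, (A : Set α))),
      IsLUB 𝒜 (⟨scottClosure (⋃ A ∈ 𝒜, (A : Set α)), h⟩ : OrderSob α) :=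
  have hirr := OrderSob.scottIrred_biUnion_of_scottIrred h𝒜
  ⟨(OrderSob.ofScottIrred hirr).2, OrderSob.isLUB_ofScottIrred_biUnion hirr⟩

end Preorder

/-- the order sobrification D̂ of any dcpo D is strongly complete: every
irreducible subset 𝒜 of D̂ has a supremum in D̂, namely the Scott closure of ⋃𝒜. -/
theorem orderSob_strongly_complete [PartialOrder α] (hD : IsDcpo α)
    (𝒜 : Set (OrderSob α)) (h𝒜 : ScottIrred 𝒜) :
    ∃ h : ScottClosed (scottClosure (⋃ A ∈ 𝒜, (A : Set α))) ∧
          ScottIrred (scottClosure (⋃ A ∈ 𝒜, (A : Set α))),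
      IsLUB 𝒜 (⟨scottClosure (⋃ A ∈ 𝒜, (A : Set α)), h⟩ : OrderSob α) :=
  orderSob_strongly_complete_general 𝒜 h𝒜

end HoZhao
end

section
/- Let D be a dcpo that is well-filtered and coherent in its Scott topology. Then for any nonempty subset A of D, the set ub(A) of upper bounds of A is compact and saturated in the Scott topology. Consequently, every dcpo which is well-filtered and coherent in its Scott topology is dominated. -/
namespace HoZhao

variable {α : Type*}

/-- x' ≺ x : for every closed irreducible set A with x ≤ sup A, one has x' ∈ A. -/
def Prec [Preorder α] (x' x : α) : Prop :=
  ∀ A : Set α, ScottClosed A → ScottIrred A → ∀ a : α, IsLUB A a → x ≤ a → x' ∈ A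

/-- A' ◁ A : A' is contained in ↓x for some x ∈ A. -/
def Tri [Preorder α] (A' A : OrderSob α) : Prop :=
  ∃ x ∈ (A : Set α), (A' : Set α) ⊆ {y : α | y ≤ x}

/-- ∇A = the collection of all A' ◁ A. -/
def Nabla [Preorder α] (A : OrderSob α) : Set (OrderSob α) := {A' | Tri A' A}

/-- A dcpo is dominated if ∇A is Scott-closed in the order sobrification, for every A. -/
def Dominated (α : Type*) [Preorder α] : Prop :=
  ∀ A : OrderSob α, ScottClosed (Nabla A)

/-- The Scott topology on a preorder: open sets are the upper sets inaccessible by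
suprema of nonempty directed sets. -/
def scottTop (α : Type*) [Preorder α] : TopologicalSpace α where
  IsOpen U := IsUpperSet U ∧ ∀ d : Set α, d.Nonempty → DirectedOn (· ≤ ·) d →
    ∀ a : α, IsLUB d a → a ∈ U → (d ∩ U).Nonempty
  isOpen_univ := ⟨isUpperSet_univ, fun d hd _ _ _ _ => hd.imp fun x hx => ⟨hx, trivial⟩⟩
  isOpen_inter := by
    rintro U V ⟨hU, hU'⟩ ⟨hV, hV'⟩
    refine ⟨hU.inter hV, ?_⟩
    rintro d hd hdir a ha ⟨haU, haV⟩
    obtain ⟨x, hxd, hxU⟩ := hU' d hd hdir a ha haU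
    obtain ⟨y, hyd, hyV⟩ := hV' d hd hdir a ha haV
    obtain ⟨z, hzd, hxz, hyz⟩ := hdir x hxd y hyd
    exact ⟨z, hzd, hU hxz hxU, hV hyz hyV⟩
  isOpen_sUnion := by
    intro 𝒮 h
    refine ⟨isUpperSet_sUnion fun U hU => (h U hU).1, ?_⟩
    rintro d hd hdir a ha haU
    rw [Set.mem_sUnion] at haU
    obtain ⟨U, hU𝒮, haU⟩ := haU
    obtain ⟨x, hxd, hxU⟩ := (h U hU𝒮).2 d hd hdir a ha haU
    exact ⟨x, hxd, Set.mem_sUnion.2 ⟨U, hU𝒮, hxU⟩⟩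

/-- Scott-open sets. -/
def ScottOpen [Preorder α] (U : Set α) : Prop := (scottTop α).IsOpen U

/-- Compactness for the Scott topology. -/
def ScottCompact [Preorder α] (K : Set α) : Prop := @IsCompact α (scottTop α) K

/-- A set is saturated if it is an intersection of Scott-open sets. -/
def ScottSaturated [Preorder α] (S : Set α) : Prop :=
  ∃ 𝒰 : Set (Set α), (∀ U ∈ 𝒰, ScottOpen U) ∧ S = ⋂₀ 𝒰

/-- The Scott topology is well-filtered: any filtered family of compact saturated sets
whose intersection is contained in an open set has a member contained in that open set. -/
def WellFiltered (α : Type*) [Preorder α] : Prop :=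
  ∀ 𝒦 : Set (Set α), 𝒦.Nonempty → DirectedOn (fun K L : Set α => L ⊆ K) 𝒦 →
    (∀ K ∈ 𝒦, ScottCompact K ∧ ScottSaturated K) →
    ∀ U : Set α, ScottOpen U → ⋂₀ 𝒦 ⊆ U → ∃ K ∈ 𝒦, K ⊆ U

/-- The Scott topology is coherent: intersections of two compact saturated sets are
compact. -/
def Coherent (α : Type*) [Preorder α] : Prop :=
  ∀ K₁ K₂ : Set α, ScottCompact K₁ → ScottSaturated K₁ → ScottCompact K₂ →
    ScottSaturated K₂ → ScottCompact (K₁ ∩ K₂)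

/-!
For finite nonempty `F`, the set `upperBounds F = ⋂ a ∈ F, ↑a` is compact by coherence. As
`upperBounds A` is the filtered intersection of these over the finite nonempty `F ⊆ A`, it is
compact by well-filteredness.

For domination, `P ◁ A` says that `upperBounds P` meets `A`. When `S` is the supremum of a directed
family of such `P`, its set of upper bounds is the filtered intersection of the compact sets
`upperBounds P`, and it must meet the Scott-closed set `A`: otherwise it would lie in the open set
`Aᶜ`, and by well-filteredness some `upperBounds P` would too.
-/

section UpperBounds

variable [Preorder α]

theorem isUpperSet_upperBounds (A : Set α) : IsUpperSet (upperBounds A) :=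
  fun _ _ hxy hx _ ha => (hx ha).trans hxy

theorem sInter_image_upperBounds (𝒜 : Set (Set α)) :
    ⋂₀ (upperBounds '' 𝒜) = upperBounds (⋃₀ 𝒜) := by
  simp_rw [Set.sInter_image, Set.sUnion_eq_biUnion, upperBounds_iUnion]

theorem directedOn_image_upperBounds {𝒜 : Set (Set α)} (h𝒜 : DirectedOn (· ⊆ ·) 𝒜) :
    DirectedOn (fun K L : Set α => L ⊆ K) (upperBounds '' 𝒜) :=
  directedOn_image.2 (h𝒜.mono fun _ _ hAB => upperBounds_mono_set hAB)

end UpperBounds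

section FiniteSubsets

variable {β : Type*} {A : Set β}

theorem directedOn_finite_nonempty_subsets :
    DirectedOn (· ⊆ ·) {F : Set β | F.Finite ∧ F.Nonempty ∧ F ⊆ A} :=
  fun F hF G hG => ⟨F ∪ G,
    ⟨hF.1.union hG.1, hF.2.1.mono Set.subset_union_left, Set.union_subset hF.2.2 hG.2.2⟩,
    Set.subset_union_left, Set.subset_union_right⟩

theorem sUnion_finite_nonempty_subsets :
    ⋃₀ {F : Set β | F.Finite ∧ F.Nonempty ∧ F ⊆ A} = A :=
  (Set.sUnion_subset fun _ hF => hF.2.2).antisymm fun a ha =>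
    Set.mem_sUnion_of_mem (Set.mem_singleton a)
      ⟨Set.finite_singleton a, Set.singleton_nonempty a, Set.singleton_subset_iff.2 ha⟩

end FiniteSubsets

section ScottTopology

variable [Preorder α]

theorem scottOpen_compl_iff {S : Set α} : ScottOpen Sᶜ ↔ ScottClosed S :=
  and_congr isUpperSet_compl dirSupInacc_compl

theorem scottSaturated_of_isUpperSet {S : Set α} (hS : IsUpperSet S) : ScottSaturated S := by
  refine ⟨(fun x => (Set.Iic x)ᶜ) '' Sᶜ,
    Set.forall_mem_image.2 fun x _ => scottOpen_compl_iff.2 (scottClosed_Iic x), ?_⟩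
  ext y
  simp only [Set.sInter_image, Set.mem_iInter, Set.mem_compl_iff, Set.mem_Iic]
  exact ⟨fun hy x hx hyx => hx (hS hyx hy), fun h => by_contra fun hy => h y hy le_rfl⟩

theorem scottSaturated_upperBounds (A : Set α) : ScottSaturated (upperBounds A) :=
  scottSaturated_of_isUpperSet (isUpperSet_upperBounds A)

theorem scottCompact_Ici (x : α) : ScottCompact (Set.Ici x) := by
  let := scottTop α
  refine isCompact_of_finite_subcover fun U hU hcover => ?_
  obtain ⟨i, hxi⟩ := Set.mem_iUnion.1 (hcover Set.self_mem_Ici)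
  exact ⟨{i}, by simpa only [Finset.mem_singleton, Set.iUnion_iUnion_eq_left]
    using (hU i).1.Ici_subset hxi⟩

theorem Coherent.scottCompact_upperBounds_of_finite (hcoh : Coherent α) {F : Set α}
    (hF : F.Finite) (hne : F.Nonempty) : ScottCompact (upperBounds F) := by
  induction F, hF using Set.Finite.induction_on with
  | empty => exact absurd hne Set.not_nonempty_empty
  | @insert a F _ _ ih =>
    rcases F.eq_empty_or_nonempty with rfl | hF
    · simpa only [insert_empty_eq, upperBounds_singleton] using scottCompact_Ici a
    · rw [upperBounds_insert]
      exact hcoh _ _ (scottCompact_Ici a) (scottSaturated_of_isUpperSet (isUpperSet_Ici a))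
        (ih hF) (scottSaturated_upperBounds F)

namespace WellFiltered

theorem scottCompact_sInter (hwf : WellFiltered α) {𝒦 : Set (Set α)} (hne : 𝒦.Nonempty)
    (hdir : DirectedOn (fun K L : Set α => L ⊆ K) 𝒦)
    (h𝒦 : ∀ K ∈ 𝒦, ScottCompact K ∧ ScottSaturated K) : ScottCompact (⋂₀ 𝒦) := by
  let := scottTop α
  refine isCompact_of_finite_subcover fun U hU hcover => ?_
  obtain ⟨K, hK, hKU⟩ := hwf 𝒦 hne hdir h𝒦 (⋃ i, U i) (isOpen_iUnion hU) hcover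
  obtain ⟨t, hKt⟩ := (h𝒦 K hK).1.elim_finite_subcover U hU hKU
  exact ⟨t, (Set.sInter_subset_of_mem hK).trans hKt⟩

theorem sInter_inter_nonempty (hwf : WellFiltered α) {𝒦 : Set (Set α)} (hne : 𝒦.Nonempty)
    (hdir : DirectedOn (fun K L : Set α => L ⊆ K) 𝒦)
    (h𝒦 : ∀ K ∈ 𝒦, ScottCompact K ∧ ScottSaturated K) {C : Set α} (hC : ScottClosed C)
    (hmeet : ∀ K ∈ 𝒦, (K ∩ C).Nonempty) : (⋂₀ 𝒦 ∩ C).Nonempty := by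
  by_contra hempty
  obtain ⟨K, hK, hKC⟩ := hwf 𝒦 hne hdir h𝒦 Cᶜ (scottOpen_compl_iff.2 hC)
    fun x hx hxC => hempty ⟨x, hx, hxC⟩
  obtain ⟨x, hxK, hxC⟩ := hmeet K hK
  exact hKC hxK hxC

theorem scottCompact_upperBounds (hwf : WellFiltered α) (hcoh : Coherent α) {A : Set α}
    (hA : A.Nonempty) : ScottCompact (upperBounds A) := by
  rw [← sUnion_finite_nonempty_subsets (A := A)] at hA ⊢
  rw [← sInter_image_upperBounds]
  exact hwf.scottCompact_sInter (hA.of_sUnion.image _)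
    (directedOn_image_upperBounds directedOn_finite_nonempty_subsets)
    (Set.forall_mem_image.2 fun F hF =>
      ⟨hcoh.scottCompact_upperBounds_of_finite hF.1 hF.2.1, scottSaturated_upperBounds F⟩)

end WellFiltered

end ScottTopology

section OrderSobrification

variable [Preorder α]

namespace OrderSob

/-- The principal ideal `↓x`, as an element of the order sobrification. -/
def principal (x : α) : OrderSob α :=
  ⟨Set.Iic x, scottClosed_Iic x, scottIrred_Iic x⟩

theorem le_principal_iff {P : OrderSob α} {x : α} :
    P ≤ principal x ↔ x ∈ upperBounds (P : Set α) :=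
  Iff.rfl

theorem upperBounds_eq_of_isLUB {d : Set (OrderSob α)} {S : OrderSob α} (hS : IsLUB d S) :
    upperBounds (S : Set α) = upperBounds (⋃₀ (Subtype.val '' d)) := by
  ext x
  rw [← le_principal_iff, isLUB_le_iff hS, ← sInter_image_upperBounds, Set.image_image,
    Set.sInter_image, Set.mem_iInter₂]
  rfl

end OrderSob

theorem mem_nabla_iff {P A : OrderSob α} :
    P ∈ Nabla A ↔ (upperBounds (P : Set α) ∩ A).Nonempty :=
  exists_congr fun _ => and_comm

theorem WellFiltered.dominated (hwf : WellFiltered α)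
    (hub : ∀ P : OrderSob α, ScottCompact (upperBounds (P : Set α))) : Dominated α := by
  refine fun A => ⟨fun P Q hQP => ?_, fun d hd hne hdir S hS => ?_⟩
  · simp only [mem_nabla_iff]
    exact Set.Nonempty.mono (Set.inter_subset_inter_left _ (upperBounds_mono_set hQP))
  · rw [mem_nabla_iff, OrderSob.upperBounds_eq_of_isLUB hS, ← sInter_image_upperBounds]
    refine hwf.sInter_inter_nonempty ((hne.image _).image _)
      (directedOn_image_upperBounds (directedOn_image.2 hdir)) ?_ A.2.1 ?_
    · rintro _ ⟨_, ⟨P, -, rfl⟩, rfl⟩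
      exact ⟨hub P, scottSaturated_upperBounds _⟩
    · rintro _ ⟨_, ⟨P, hP, rfl⟩, rfl⟩
      exact mem_nabla_iff.1 (hd hP)

theorem wellFiltered_coherent_dominated_general (hwf : WellFiltered α) (hcoh : Coherent α) :
    (∀ A : Set α, A.Nonempty →
      ScottCompact (upperBounds A) ∧ ScottSaturated (upperBounds A)) ∧
    Dominated α :=
  ⟨fun A hA => ⟨hwf.scottCompact_upperBounds hcoh hA, scottSaturated_upperBounds A⟩,
    hwf.dominated fun P => hwf.scottCompact_upperBounds hcoh P.2.2.1⟩

end OrderSobrification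

/-- in a well-filtered coherent dcpo the set of upper bounds of any nonempty
set is compact saturated; consequently such a dcpo is dominated. -/
theorem wellFiltered_coherent_dominated [PartialOrder α] (hD : IsDcpo α)
    (hwf : WellFiltered α) (hcoh : Coherent α) :
    (∀ A : Set α, A.Nonempty →
      ScottCompact (upperBounds A) ∧ ScottSaturated (upperBounds A)) ∧
    Dominated α :=
  wellFiltered_coherent_dominated_general hwf hcoh

end HoZhao
end

section
/- The dcpo ℍ is not dominated: the family 𝓕 = {↓L_(n) : n ∈ ℕ} (where (n) is the one-element list) is a directed subset of ∇ℍ whose supremum in ℍ̂ is ℍ itself, yet ℍ ◁ ℍ fails; hence ∇ℍ is not Scott-closed in ℍ̂. -/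
namespace HoZhao

variable {α : Type*}

/-- The underlying set of the dcpo ℍ: pairs (m, s) with m ∈ ℕ and s ∈ ℕ*. -/
abbrev HPt := ℕ × List ℕ

/-- (m, n::s) <₁ (m, n'::s) iff n < n'. -/
def hlt1 (p q : HPt) : Prop :=
  ∃ (m n n' : ℕ) (s : List ℕ), n < n' ∧ p = (m, n :: s) ∧ q = (m, n' :: s)

/-- (m, t++s) <₂ (m, s) iff t ≠ ε. -/
def hlt2 (p q : HPt) : Prop :=
  ∃ (m : ℕ) (t s : List ℕ), t ≠ [] ∧ p = (m, t ++ s) ∧ q = (m, s)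

/-- (m, t++s) <₃ (m', s) iff t ≠ ε and min(t) ≤ m'. -/
def hlt3 (p q : HPt) : Prop :=
  ∃ (m m' : ℕ) (t s : List ℕ), t ≠ [] ∧ t.minimum ≤ (m' : ℕ) ∧
    p = (m, t ++ s) ∧ q = (m', s)

/-- The strict order < on ℍ: <₁ ∪ <₂ ∪ <₃ ∪ (<₂;<₁) ∪ (<₃;<₁). -/
def hlt (p q : HPt) : Prop :=
  hlt1 p q ∨ hlt2 p q ∨ hlt3 p q ∨ (∃ r, hlt2 p r ∧ hlt1 r q) ∨ (∃ r, hlt3 p r ∧ hlt1 r q)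

/-- The order ≤ on ℍ: < together with equality. -/
def hle (p q : HPt) : Prop := hlt p q ∨ p = q

/-- Least upper bound with respect to a relation r. -/
def IsLubRel {γ : Type*} (r : γ → γ → Prop) (s : Set γ) (a : γ) : Prop :=
  (∀ x ∈ s, r x a) ∧ ∀ b, (∀ x ∈ s, r x b) → r a b

/-- Scott-closedness with respect to a relation r: a lower set containing the r-suprema of
its nonempty r-directed subsets. -/
def ScottClosedRel {γ : Type*} (r : γ → γ → Prop) (S : Set γ) : Prop :=
  (∀ x y, r x y → y ∈ S → x ∈ S) ∧
  ∀ d : Set γ, d ⊆ S → d.Nonempty → DirectedOn r d → ∀ a, IsLubRel r d a → a ∈ S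

/-- Irreducibility with respect to a relation r. -/
def ScottIrredRel {γ : Type*} (r : γ → γ → Prop) (A : Set γ) : Prop :=
  A.Nonempty ∧ ∀ B C : Set γ, ScottClosedRel r B → ScottClosedRel r C → A ⊆ B ∪ C →
    A ⊆ B ∨ A ⊆ C

/-- The order sobrification ℍ̂: closed irreducible subsets of ℍ, ordered by inclusion. -/
abbrev HSob := {A : Set HPt // ScottClosedRel hle A ∧ ScottIrredRel hle A}

/-- A' ◁ A in ℍ̂: A' ⊆ ↓x for some x ∈ A. -/
def TriH (A' A : HSob) : Prop := ∃ x ∈ A.val, A'.val ⊆ {y : HPt | hle y x}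

/-- ∇A in ℍ̂. -/
def NablaH (A : HSob) : Set HSob := {A' | TriH A' A}

/-!
Since `(m, n :: s) ≤ (m', s)` as soon as `n ≤ m'`, a point of `L_(n :: s)` lies below almost all of
`L_s`; and for each `m` the chain `(m, n :: s)`, `n ∈ ℕ`, has supremum `(m, s)`. So a Scott-closed
set containing infinitely many points of `L_s` contains all of them, which makes `↓L_s`
irreducible. It is also closed: above an element with shortest list, a directed set varies only in
the head of the list, so a directed subset of `↓L_s` is bounded in `↓L_s`. By the chains above,
`↓L_s` is the least closed set containing every `↓L_(n :: s)`. Each `↓L_(n :: s)` lies below the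
single point `(n, s)`, whereas `↓L_s` lies below no point of its own, distinct points of `L_s` being
incomparable. For `s = ε`, `↓L_s` is `ℍ`.
-/

open Filter

section Relation

variable {γ : Type*} {r : γ → γ → Prop}

theorem forall_rel_of_directedOn [IsTrans γ r] {d : Set γ} (hd : DirectedOn r d) {p b : γ}
    (hp : p ∈ d) (hb : ∀ q ∈ d, r p q → r q b) : ∀ x ∈ d, r x b := by
  intro x hx
  obtain ⟨z, hz, hpz, hxz⟩ := hd p hp x hx
  exact trans_of r hxz (hb z hz hpz)

theorem scottClosedRel_of_exists_upperBound {S : Set γ} (hlow : ∀ x y, r x y → y ∈ S → x ∈ S)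
    (hub : ∀ d ⊆ S, d.Nonempty → DirectedOn r d → ∃ b ∈ S, ∀ x ∈ d, r x b) :
    ScottClosedRel r S := by
  refine ⟨hlow, fun d hdS hne hd a ha => ?_⟩
  obtain ⟨b, hbS, hb⟩ := hub d hdS hne hd
  exact hlow a b (ha.2 b hb) hbS

end Relation

section HeadLE

/-- The relation between lists that agree except possibly at the head, where the entries are
related by `≤`. On `List ℕ` it is the reflexive closure of `<₁` with the first coordinate
forgotten, and `(m, s) ≤ (m', s')` says that `s = t ++ u` with `HeadLE u s'`, where `m = m'` or
`min t ≤ m'`. -/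
inductive HeadLE [LE α] : List α → List α → Prop
  | nil : HeadLE [] []
  | cons {a b : α} (s : List α) (h : a ≤ b) : HeadLE (a :: s) (b :: s)

namespace HeadLE

theorem refl [Preorder α] : ∀ s : List α, HeadLE s s
  | [] => nil
  | _ :: s => cons s le_rfl

theorem trans [Preorder α] {s t u : List α} (hst : HeadLE s t) (htu : HeadLE t u) :
    HeadLE s u := by
  cases hst with
  | nil => exact htu
  | cons s hab =>
    cases htu with
    | cons _ hbc => exact cons s (hab.trans hbc)

theorem length_eq [LE α] {s t : List α} (h : HeadLE s t) : s.length = t.length := by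
  cases h <;> simp only [List.length_cons]

theorem exists_eq_append [Preorder α] {s t u : List α} (h : HeadLE s (t ++ u)) :
    ∃ t' u', s = t' ++ u' ∧ HeadLE u' u ∧ ∀ x ∈ t, ∃ y ∈ t', y ≤ x := by
  cases t with
  | nil => exact ⟨[], s, rfl, h, by simp⟩
  | cons b t =>
    cases h with
    | @cons a _ _ hab =>
      refine ⟨a :: t, u, rfl, refl u, fun x hx => ?_⟩
      rcases List.mem_cons.1 hx with rfl | hx
      · exact ⟨a, List.mem_cons_self, hab⟩
      · exact ⟨x, List.mem_cons_of_mem a hx, le_rfl⟩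

end HeadLE

end HeadLE

section Order

theorem minimum_le_coe_iff [LinearOrder α] {t : List α} {a : α} :
    t.minimum ≤ (a : WithTop α) ↔ ∃ x ∈ t, x ≤ a := by
  refine ⟨fun h => ?_, fun ⟨x, hx, hxa⟩ =>
    (List.minimum_le_of_mem' hx).trans (WithTop.coe_le_coe.2 hxa)⟩
  obtain ⟨x, hx, hxa⟩ := WithTop.le_coe_iff.1 h
  exact ⟨x, List.minimum_mem hx, hxa⟩

variable {m m' n n' : ℕ} {s s' t u : List ℕ} {p q r : HPt}

theorem HeadLE.eq_or_hlt1 (h : HeadLE s s') (m : ℕ) : s = s' ∨ hlt1 (m, s) (m, s') := by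
  cases h with
  | nil => exact Or.inl rfl
  | cons s h =>
    rcases h.eq_or_lt with rfl | h
    · exact Or.inl rfl
    · exact Or.inr ⟨m, _, _, s, h, rfl, rfl⟩

theorem exists_append_of_hle (h : hle (m, s) (m', s')) :
    ∃ t u, s = t ++ u ∧ HeadLE u s' ∧ (m = m' ∨ ∃ x ∈ t, x ≤ m') := by
  rcases h with (⟨_, _, _, v, hn, hp, hq⟩ | ⟨_, t, u, -, hp, hq⟩ | ⟨_, _, t, u, -, hmin, hp, hq⟩ |
    ⟨_, ⟨_, t, u, -, hp, hr⟩, ⟨_, _, _, v, hn, hr', hq⟩⟩ |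
    ⟨_, ⟨_, _, t, u, -, hmin, hp, hr⟩, ⟨_, _, _, v, hn, hr', hq⟩⟩) | hpq
  · cases hp; cases hq
    exact ⟨[], _, rfl, .cons v hn.le, Or.inl rfl⟩
  · cases hp; cases hq
    exact ⟨t, _, rfl, .refl _, Or.inl rfl⟩
  · cases hp; cases hq
    exact ⟨t, _, rfl, .refl _, Or.inr (minimum_le_coe_iff.1 hmin)⟩
  · cases hp; cases hq; cases hr; cases hr'
    exact ⟨t, _, rfl, .cons v hn.le, Or.inl rfl⟩
  · cases hp; cases hq; cases hr; cases hr'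
    exact ⟨t, _, rfl, .cons v hn.le, Or.inr (minimum_le_coe_iff.1 hmin)⟩
  · cases hpq
    exact ⟨[], s, rfl, .refl s, Or.inl rfl⟩

theorem hle_of_append (hu : HeadLE u s') (hm : m = m' ∨ ∃ x ∈ t, x ≤ m') :
    hle (m, t ++ u) (m', s') := by
  by_cases ht : t = []
  · subst ht
    obtain rfl : m = m' := by simpa using hm
    rcases hu.eq_or_hlt1 m with rfl | h1
    · exact Or.inr rfl
    · exact Or.inl (Or.inl h1)
  · have h23 : hlt2 (m, t ++ u) (m', u) ∨ hlt3 (m, t ++ u) (m', u) := by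
      rcases hm with rfl | hm
      · exact Or.inl ⟨m, t, u, ht, rfl, rfl⟩
      · exact Or.inr ⟨m, m', t, u, ht, minimum_le_coe_iff.2 hm, rfl, rfl⟩
    left; right
    rcases hu.eq_or_hlt1 m' with rfl | h1
    · exact h23.elim Or.inl fun h3 => Or.inr (Or.inl h3)
    · exact Or.inr (Or.inr (h23.imp (fun h2 => ⟨_, h2, h1⟩) fun h3 => ⟨_, h3, h1⟩))

theorem hle_refl (p : HPt) : hle p p := Or.inr rfl

theorem hle_trans (hpq : hle p q) (hqr : hle q r) : hle p r := by
  obtain ⟨m, s⟩ := p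
  obtain ⟨m', s'⟩ := q
  obtain ⟨m'', s''⟩ := r
  obtain ⟨t, u, rfl, hu, hm⟩ := exists_append_of_hle hpq
  obtain ⟨t', u', rfl, hu', hm'⟩ := exists_append_of_hle hqr
  obtain ⟨v, w, rfl, hw, hv⟩ := hu.exists_eq_append
  rw [← List.append_assoc]
  refine hle_of_append (hw.trans hu') ?_
  rcases hm' with rfl | ⟨x, hx, hxm⟩
  · exact hm.imp_right fun ⟨x, hx, hxm⟩ => ⟨x, List.mem_append_left v hx, hxm⟩
  · obtain ⟨y, hy, hyx⟩ := hv x hx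
    exact Or.inr ⟨y, List.mem_append_right t hy, hyx.trans hxm⟩

instance : IsTrans HPt hle := ⟨fun _ _ _ => hle_trans⟩

theorem hle_of_headLE (m : ℕ) (h : HeadLE s s') : hle (m, s) (m, s') :=
  hle_of_append (t := []) h (Or.inl rfl)

theorem hle_cons (m : ℕ) (s : List ℕ) (h : n ≤ n') : hle (m, n :: s) (m, n' :: s) :=
  hle_of_headLE m (.cons s h)

theorem hle_append (m : ℕ) (t s : List ℕ) : hle (m, t ++ s) (m, s) :=
  hle_of_append (.refl s) (Or.inl rfl)

theorem hle_of_head_le_fst (m : ℕ) (s : List ℕ) (h : n ≤ m') : hle (m, n :: s) (m', s) :=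
  hle_of_append (t := [n]) (.refl s) (Or.inr ⟨n, List.mem_singleton_self n, h⟩)

theorem length_le_of_hle (h : hle p q) : q.2.length ≤ p.2.length := by
  obtain ⟨t, u, hs, hu, -⟩ := exists_append_of_hle h
  rw [hs, List.length_append, hu.length_eq]
  exact Nat.le_add_left _ _

theorem fst_eq_and_headLE_of_hle (h : hle p q) (hlen : p.2.length ≤ q.2.length) :
    p.1 = q.1 ∧ HeadLE p.2 q.2 := by
  obtain ⟨t, u, hs, hu, hm⟩ := exists_append_of_hle h
  rw [hs, List.length_append, ← hu.length_eq] at hlen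
  obtain rfl : t = [] := List.length_eq_zero_iff.1 (by omega)
  exact ⟨by simpa using hm, hs ▸ hu⟩

theorem hle_of_hle_cons (hm : m' < n) (hs : s'.headI < n) (h : hle (m, n :: s) (m', s')) :
    hle (m, s) (m', s') := by
  obtain ⟨t, u, htu, hu, hmt⟩ := exists_append_of_hle h
  cases t with
  | nil =>
    obtain rfl : n :: s = u := htu
    cases hu with
    | cons _ hhead => exact absurd hs hhead.not_gt
  | cons a t =>
    obtain ⟨rfl, rfl⟩ := List.cons.inj htu
    refine hle_of_append hu (hmt.imp_right fun ⟨x, hx, hxm⟩ => ?_)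
    rcases List.mem_cons.1 hx with rfl | hx
    · exact absurd hxm hm.not_ge
    · exact ⟨x, hx, hxm⟩

theorem isLubRel_range_cons (m : ℕ) (s : List ℕ) :
    IsLubRel hle (Set.range fun n : ℕ => ((m, n :: s) : HPt)) (m, s) := by
  refine ⟨Set.forall_mem_range.2 fun n => hle_append m [n] s, fun ⟨m', s'⟩ hub => ?_⟩
  exact hle_of_hle_cons (n := max m' s'.headI + 1) (by omega) (by omega) (hub _ ⟨_, rfl⟩)

theorem directedOn_range_cons (m : ℕ) (s : List ℕ) :
    DirectedOn hle (Set.range fun n : ℕ => ((m, n :: s) : HPt)) := by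
  rintro _ ⟨a, rfl⟩ _ ⟨b, rfl⟩
  exact ⟨_, ⟨max a b, rfl⟩, hle_cons m s (le_max_left a b), hle_cons m s (le_max_right a b)⟩

end Order

section DownLevel

variable {n n' : ℕ} {s : List ℕ} {B : Set HPt} {p : HPt}

theorem ScottClosedRel.mem_of_forall_cons_mem (hB : ScottClosedRel hle B) {m : ℕ}
    (h : ∀ n, (m, n :: s) ∈ B) : (m, s) ∈ B :=
  hB.2 _ (Set.range_subset_iff.2 h) (Set.range_nonempty _) (directedOn_range_cons m s) _
    (isLubRel_range_cons m s)

/-- The lower closure `↓L_s` of the level `L_s`. The family `𝓕` consists of the sets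
`downLevel [n]`, and `ℍ` itself is `downLevel []`. -/
def downLevel (s : List ℕ) : Set HPt := {p | ∃ m : ℕ, hle p (m, s)}

theorem mem_downLevel (m : ℕ) (s : List ℕ) : (m, s) ∈ downLevel s := ⟨m, hle_refl _⟩

theorem mem_downLevel_of_hle {q : HPt} (hpq : hle p q) : q ∈ downLevel s → p ∈ downLevel s :=
  fun ⟨m, hq⟩ => ⟨m, hle_trans hpq hq⟩

theorem length_le_of_mem_downLevel (h : p ∈ downLevel s) : s.length ≤ p.2.length :=
  let ⟨_, hp⟩ := h
  length_le_of_hle hp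

theorem downLevel_nil : downLevel [] = Set.univ :=
  Set.eq_univ_of_forall fun ⟨m, s⟩ => ⟨m, List.append_nil s ▸ hle_append m s []⟩

theorem downLevel_cons_mono (s : List ℕ) (h : n ≤ n') :
    downLevel (n :: s) ⊆ downLevel (n' :: s) :=
  fun _ ⟨m, hp⟩ => ⟨m, hle_trans hp (hle_cons m s h)⟩

theorem hle_of_mem_downLevel_cons (h : p ∈ downLevel (n :: s)) : hle p (n, s) :=
  let ⟨m, hp⟩ := h
  hle_trans hp (hle_of_head_le_fst m s le_rfl)

theorem ScottClosedRel.downLevel_subset (hB : ScottClosedRel hle B) (h : ∀ m, (m, s) ∈ B) :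
    downLevel s ⊆ B :=
  fun p ⟨m, hp⟩ => hB.1 p (m, s) hp (h m)

theorem ScottClosedRel.downLevel_subset_of_frequently (hB : ScottClosedRel hle B)
    (h : ∃ᶠ m in atTop, (m, s) ∈ B) : downLevel s ⊆ B := by
  refine hB.downLevel_subset fun m => hB.mem_of_forall_cons_mem fun n => ?_
  obtain ⟨m', hnm', hm'⟩ := frequently_atTop.1 h n
  exact hB.1 _ _ (hle_of_head_le_fst m s hnm') hm'

theorem scottIrredRel_downLevel (s : List ℕ) : ScottIrredRel hle (downLevel s) := by
  refine ⟨⟨_, mem_downLevel 0 s⟩, fun B C hB hC hBC => ?_⟩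
  have hcover : ∃ᶠ m in atTop, (m, s) ∈ B ∨ (m, s) ∈ C :=
    Frequently.of_forall fun m => hBC (mem_downLevel m s)
  exact (frequently_or_distrib.1 hcover).imp hB.downLevel_subset_of_frequently
    hC.downLevel_subset_of_frequently

theorem exists_forall_fst_eq_and_headLE {d : Set HPt} (hd : d.Nonempty) :
    ∃ p ∈ d, ∀ q ∈ d, hle p q → p.1 = q.1 ∧ HeadLE p.2 q.2 := by
  obtain ⟨p, hp, hmin⟩ := exists_minimalFor_of_wellFoundedLT (· ∈ d) (fun p => p.2.length) hd
  exact ⟨p, hp, fun q hq hpq =>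
    fst_eq_and_headLE_of_hle hpq (hmin hq (length_le_of_hle hpq))⟩

theorem exists_upperBound_mem_downLevel {d : Set HPt} (hds : d ⊆ downLevel s) (hne : d.Nonempty)
    (hd : DirectedOn hle d) : ∃ b ∈ downLevel s, ∀ x ∈ d, hle x b := by
  obtain ⟨⟨m, v⟩, hp, hhead⟩ := exists_forall_fst_eq_and_headLE hne
  suffices h : ∃ b ∈ downLevel s, ∀ q ∈ d, m = q.1 → HeadLE v q.2 → hle q b by
    obtain ⟨b, hb, hub⟩ := h
    exact ⟨b, hb, forall_rel_of_directedOn hd hp fun q hq hpq =>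
      (hhead q hq hpq).elim (hub q hq)⟩
  obtain ⟨m₀, hps⟩ := hds hp
  obtain ⟨t, u, rfl, hu, -⟩ := exists_append_of_hle hps
  cases t with
  | nil =>
    refine ⟨(m, s), mem_downLevel m s, ?_⟩
    rintro ⟨_, w⟩ hq rfl hw
    obtain ⟨m₁, hqs⟩ := hds hq
    have hlen : w.length = s.length := hw.length_eq.symm.trans hu.length_eq
    exact hle_of_headLE m (fst_eq_and_headLE_of_hle hqs hlen.le).2
  | cons a t =>
    refine ⟨(m, t ++ u), ⟨m, hle_of_append hu (Or.inl rfl)⟩, ?_⟩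
    rintro ⟨_, w⟩ - rfl hw
    cases hw with
    | @cons _ b _ _ => exact hle_append m [b] (t ++ u)

theorem scottClosedRel_downLevel (s : List ℕ) : ScottClosedRel hle (downLevel s) :=
  scottClosedRel_of_exists_upperBound (fun _ _ => mem_downLevel_of_hle)
    fun _ => exists_upperBound_mem_downLevel

end DownLevel

section Sobrification

/-- `↓L_s` as an element of the order sobrification `ℍ̂`, where `◁` and `∇` live. -/
def downLevelSob (s : List ℕ) : HSob :=
  ⟨downLevel s, scottClosedRel_downLevel s, scottIrredRel_downLevel s⟩

theorem directedOn_range_downLevelSob_cons (s : List ℕ) :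
    DirectedOn (· ≤ ·) (Set.range fun n => downLevelSob (n :: s)) :=
  Directed.directedOn_range <|
    Monotone.directed_le (f := fun n => downLevelSob (n :: s)) fun _ _ => downLevel_cons_mono s

theorem range_downLevelSob_cons_subset_nablaH (s : List ℕ) :
    (Set.range fun n => downLevelSob (n :: s)) ⊆ NablaH (downLevelSob s) :=
  Set.range_subset_iff.2 fun n => ⟨(n, s), mem_downLevel n s, fun _ => hle_of_mem_downLevel_cons⟩

theorem isLUB_range_downLevelSob_cons (s : List ℕ) :
    IsLUB (Set.range fun n => downLevelSob (n :: s)) (downLevelSob s) := by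
  refine ⟨Set.forall_mem_range.2 fun n p hp => ⟨n, hle_of_mem_downLevel_cons hp⟩, fun G hG => ?_⟩
  exact G.2.1.downLevel_subset fun m => G.2.1.mem_of_forall_cons_mem fun n =>
    hG ⟨n, rfl⟩ (mem_downLevel m (n :: s))

theorem not_triH_downLevelSob (s : List ℕ) : ¬ TriH (downLevelSob s) (downLevelSob s) := by
  rintro ⟨x, hx, hub⟩
  have hfst (k : ℕ) : k = x.1 :=
    (fst_eq_and_headLE_of_hle (hub (mem_downLevel k s)) (length_le_of_mem_downLevel hx)).1
  exact zero_ne_one ((hfst 0).trans (hfst 1).symm)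

theorem not_scottClosed_nablaH_downLevelSob (s : List ℕ) :
    ¬ ScottClosed (NablaH (downLevelSob s)) := fun hclosed =>
  not_triH_downLevelSob s <| hclosed.2 _ (range_downLevelSob_cons_subset_nablaH s)
    (Set.range_nonempty _) (directedOn_range_downLevelSob_cons s) _
    (isLUB_range_downLevelSob_cons s)

end Sobrification

theorem H_not_dominated_general (s : List ℕ) :
    (ScottClosedRel hle (downLevel s) ∧ ScottIrredRel hle (downLevel s)) ∧
    ∀ A : HSob, A.val = downLevel s →
      (∃ F : ℕ → HSob,
        (∀ n : ℕ, (F n).val = downLevel (n :: s)) ∧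
        DirectedOn (· ≤ ·) (Set.range F) ∧
        Set.range F ⊆ NablaH A ∧
        IsLUB (Set.range F) A) ∧
      ¬ TriH A A ∧
      ¬ ScottClosed (NablaH A) := by
  refine ⟨(downLevelSob s).2, fun A hA => ?_⟩
  obtain rfl : A = downLevelSob s := Subtype.ext hA
  exact ⟨⟨fun n => downLevelSob (n :: s), fun _ => rfl, directedOn_range_downLevelSob_cons s,
    range_downLevelSob_cons_subset_nablaH s, isLUB_range_downLevelSob_cons s⟩,
    not_triH_downLevelSob s, not_scottClosed_nablaH_downLevelSob s⟩

/-- ℍ is not dominated: ℍ (= the whole set, a closed irreducible subset of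
itself) admits the directed family 𝓕 = {↓L_(n) : n ∈ ℕ} ⊆ ∇ℍ whose supremum in ℍ̂ is ℍ,
yet ℍ ◁ ℍ fails; hence ∇ℍ is not Scott-closed in ℍ̂. -/
theorem H_not_dominated :
    (ScottClosedRel hle (Set.univ : Set HPt) ∧ ScottIrredRel hle (Set.univ : Set HPt)) ∧
    ∀ Htop : HSob, Htop.val = Set.univ →
      (∃ F : ℕ → HSob,
        (∀ n : ℕ, (F n).val = {p : HPt | ∃ m : ℕ, hle p (m, [n])}) ∧
        DirectedOn (· ≤ ·) (Set.range F) ∧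
        Set.range F ⊆ NablaH Htop ∧
        IsLUB (Set.range F) Htop) ∧
      ¬ TriH Htop Htop ∧
      ¬ ScottClosed (NablaH Htop) := by
  exact downLevel_nil ▸ H_not_dominated_general []

end HoZhao
end
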